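/- Let X be a measurable space, D and D' probability measures on X, and H̃ a countable nonempty set of measurable functions from X to {0,1}. Fix n ≥ 1 and δ ∈ (0,1). Then with probability at least 1 − δ over independent i.i.d. samples S = (x_1, …, x_n) ∼ D^n and S' = (x'_1, …, x'_n) ∼ (D')^n: d_{H̃}(D, D') ≤ d_{H̃}(D̂, D̂') + 2·Rad_S(H̃) + 2·Rad_{S'}(H̃) + 6·√(log(4/δ)/(2n)), where D̂ and D̂' are the empirical distributions of S and S' (uniform measures on the sample points). -/

import Mathlib

open MeasureTheory Set
open scoped ENNReal

/-- The empirical Rademacher complexity of the class `H` w.r.t. the sample `x`: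
the expectation, over i.i.d. uniform signs `σ ∈ {−1,+1}^n`, of
`sup_{h ∈ H} (1/n) ∑ i σ_i h(x_i)`.  The expectation is written as the average
over all `2^n` sign vectors (encoded as `Fin n → Bool`). -/
noncomputable def radS {X : Type*} {n : ℕ} (x : Fin n → X) (H : Set (X → ℝ)) : ℝ :=
  (∑ σ : Fin n → Bool,
    sSup ((fun h => (1 / (n : ℝ)) * ∑ i, (if σ i then (1 : ℝ) else -1) * h (x i)) '' H))
    / 2 ^ n

/-- The H-divergence induced by a class `H` of `{0,1}`-valued functions:
`d_H(P,Q) := sup_{h ∈ H} |P({x : h(x) = 1}) − Q({x : h(x) = 1})|`. -/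
noncomputable def dH {X : Type*} [MeasurableSpace X] (H : Set (X → ℝ))
    (P Q : Measure X) : ℝ :=
  sSup ((fun h => |(P {x | h x = 1}).toReal - (Q {x | h x = 1}).toReal|) '' H)

/-- The empirical distribution of the sample `ω = (x_1, …, x_n)`: the uniform
measure on the sample points. -/
noncomputable def empD {X : Type*} [MeasurableSpace X] {n : ℕ} (ω : Fin n → X) : Measure X :=
  ((n : ℝ≥0∞))⁻¹ • ∑ i, Measure.dirac (ω i)


open ProbabilityTheory

lemma integrable_of_bdd {Ω : Type*} [MeasurableSpace Ω] {μ : Measure Ω} [IsFiniteMeasure μ]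
    {f : Ω → ℝ} (hf : Measurable f) {M : ℝ} (hM : ∀ x, |f x| ≤ M) : Integrable f μ :=
  Integrable.of_bound hf.aestronglyMeasurable M (Filter.Eventually.of_forall hM)

lemma integrable_exp_of_bdd {Ω : Type*} [MeasurableSpace Ω] {μ : Measure Ω} [IsFiniteMeasure μ]
    {f : Ω → ℝ} (hf : Measurable f) {M : ℝ} (hM : ∀ x, |f x| ≤ M) (s : ℝ) :
    Integrable (fun x => Real.exp (s * f x)) μ := by
  refine integrable_of_bdd (M := Real.exp (|s| * M)) (by fun_prop) fun x => ?_
  rw [abs_of_pos (Real.exp_pos _), Real.exp_le_exp]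
  calc s * f x ≤ |s * f x| := le_abs_self _
    _ = |s| * |f x| := abs_mul _ _
    _ ≤ |s| * M := by gcongr; exact hM x

lemma hoeffding_osc {Ω : Type*} [MeasurableSpace Ω] (μ : Measure Ω) [IsProbabilityMeasure μ]
    {g : Ω → ℝ} (hg : Measurable g) {M : ℝ} (hM : ∀ x, |g x| ≤ M) {c : ℝ}
    (hc : ∀ x y, g x - g y ≤ c) (s : ℝ) :
    ∫ x, Real.exp (s * g x) ∂μ ≤ Real.exp (s * ∫ x, g x ∂μ + s ^ 2 * c ^ 2 / 8) := by
  have hne : Nonempty Ω := nonempty_of_isProbabilityMeasure μ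
  have hbdd : BddBelow (range g) := ⟨-M, by rintro _ ⟨x, rfl⟩; exact (abs_le.mp (hM x)).1⟩
  have hmem : ∀ x, g x ∈ Icc (⨅ y, g y) ((⨅ y, g y) + c) := fun x =>
    ⟨ciInf_le hbdd x, by
      have : g x - c ≤ ⨅ y, g y := le_ciInf fun y => by linarith [hc x y]
      linarith⟩
  have h := (hasSubgaussianMGF_of_mem_Icc (μ := μ) hg.aemeasurable
    (Filter.Eventually.of_forall hmem)).mgf_le s
  have hc0 : 0 ≤ c := by simpa using hc hne.some hne.some
  simp only [mgf, mul_sub, Real.exp_sub, integral_div, add_sub_cancel_left] at h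
  rw [div_le_iff₀ (Real.exp_pos _), ← Real.exp_add] at h
  refine h.trans (le_of_eq ?_)
  congr 1
  simp [abs_of_nonneg hc0]
  ring

lemma mcdiarmid_mgf {X : Type*} [MeasurableSpace X] (μ : Measure X) [IsProbabilityMeasure μ]
    {c M : ℝ} (s : ℝ) : ∀ (n : ℕ) (f : (Fin n → X) → ℝ), Measurable f → (∀ x, |f x| ≤ M) →
    (∀ x y i, (∀ j, j ≠ i → x j = y j) → f x - f y ≤ c) →
    ∫ x, Real.exp (s * f x) ∂(Measure.pi fun _ : Fin n => μ) ≤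
      Real.exp (s * ∫ x, f x ∂(Measure.pi fun _ : Fin n => μ) + n * (s ^ 2 * c ^ 2 / 8)) := by
  intro n
  induction n with
  | zero =>
    intro f hf hM hc
    have h0 : ∀ x, f x = f default := fun x => by rw [Subsingleton.elim x default]
    simp [h0]
  | succ n ih =>
    intro f hf hM hc
    set e := MeasurableEquiv.piFinSuccAbove (fun _ : Fin (n+1) => X) 0 with he
    have hmp : MeasurePreserving e.symm (μ.prod (Measure.pi fun _ : Fin n => μ))
        (Measure.pi fun _ : Fin (n+1) => μ) :=
      (measurePreserving_piFinSuccAbove (fun _ : Fin (n+1) => μ) 0).symm e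
    have hes : ∀ p : X × (Fin n → X), e.symm p = Fin.cons p.1 p.2 := fun p => by
      rw [he]; ext i; simp [MeasurableEquiv.piFinSuccAbove]
    let F : X × (Fin n → X) → ℝ := fun p => f (e.symm p)
    have hF : Measurable F := hf.comp e.symm.measurable
    have hFM : ∀ p, |F p| ≤ M := fun p => hM _
    have hFi := integrable_of_bdd (μ := μ.prod (Measure.pi fun _ : Fin n => μ)) hF hFM
    have hFe := integrable_exp_of_bdd (μ := μ.prod (Measure.pi fun _ : Fin n => μ)) hF hFM s
    have h1 : ∫ x, f x ∂(Measure.pi fun _ : Fin (n+1) => μ) =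
        ∫ a, ∫ y, F (a, y) ∂(Measure.pi fun _ : Fin n => μ) ∂μ := by
      rw [← hmp.integral_comp e.symm.measurableEmbedding, integral_prod _ hFi]
    have h2 : ∫ x, Real.exp (s * f x) ∂(Measure.pi fun _ : Fin (n+1) => μ) =
        ∫ a, ∫ y, Real.exp (s * F (a, y)) ∂(Measure.pi fun _ : Fin n => μ) ∂μ := by
      rw [← hmp.integral_comp e.symm.measurableEmbedding, integral_prod _ hFe]
    rw [h1, h2]
    let g : X → ℝ := fun a => ∫ y, F (a, y) ∂(Measure.pi fun _ : Fin n => μ)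
    have hg : Measurable g := (hF.stronglyMeasurable.integral_prod_right).measurable
    have hsec : ∀ a, Measurable fun y => F (a, y) := fun a => hF.comp (by fun_prop)
    have hsi : ∀ a, Integrable (fun y => F (a, y)) (Measure.pi fun _ : Fin n => μ) :=
      fun a => integrable_of_bdd (hsec a) fun y => hFM _
    have hgM : ∀ a, |g a| ≤ M := fun a => by
      have := norm_integral_le_of_norm_le_const (μ := Measure.pi fun _ : Fin n => μ)
        (f := fun y => F (a, y)) (C := M) (Filter.Eventually.of_forall fun y => hFM _)
      simpa using this
    have hgc : ∀ a b, g a - g b ≤ c := fun a b => by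
      simp only [g]
      rw [← integral_sub (hsi a) (hsi b)]
      calc _ ≤ ∫ y, c ∂(Measure.pi fun _ : Fin n => μ) := by
            refine integral_mono ((hsi a).sub (hsi b)) (integrable_const c) fun y => ?_
            refine hc _ _ 0 fun j hj => ?_
            rw [hes, hes]
            obtain ⟨k, rfl⟩ := Fin.exists_succ_eq.mpr hj
            simp
        _ = c := by simp
    have hin : ∀ a, ∫ y, Real.exp (s * F (a, y)) ∂(Measure.pi fun _ : Fin n => μ) ≤
        Real.exp (s * g a) * Real.exp (n * (s ^ 2 * c ^ 2 / 8)) := fun a => by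
      rw [← Real.exp_add]
      refine ih _ (hsec a) (fun y => hFM _) fun x y i hxy => ?_
      refine hc _ _ i.succ fun j hj => ?_
      rw [hes, hes]
      induction j using Fin.cases with
      | zero => simp
      | succ k => simpa using hxy k (fun h => hj (by rw [h]))
    calc _ ≤ ∫ a, Real.exp (s * g a) * Real.exp (n * (s ^ 2 * c ^ 2 / 8)) ∂μ :=
          integral_mono hFe.integral_prod_left
            ((integrable_exp_of_bdd hg hgM s).mul_const _) hin
      _ ≤ Real.exp (s * ∫ x, g x ∂μ + s ^ 2 * c ^ 2 / 8) * Real.exp (n * (s ^ 2 * c ^ 2 / 8)) := by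
          rw [integral_mul_const]
          gcongr
          exact hoeffding_osc μ hg hgM hgc s
      _ = _ := by
          rw [← Real.exp_add]; congr 1; push_cast; ring

lemma mcdiarmid {X : Type*} [MeasurableSpace X] (μ : Measure X) [IsProbabilityMeasure μ]
    {c M : ℝ} (n : ℕ) (f : (Fin n → X) → ℝ) (hf : Measurable f) (hM : ∀ x, |f x| ≤ M)
    (hc : ∀ x y i, (∀ j, j ≠ i → x j = y j) → f x - f y ≤ c)
    (hE : ∫ x, f x ∂(Measure.pi fun _ : Fin n => μ) ≤ 0) {t : ℝ} (ht : 0 ≤ t) :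
    (Measure.pi fun _ : Fin n => μ).real {x | t ≤ f x} ≤
      Real.exp (- t ^ 2 / (2 * (n * c ^ 2 / 4))) := by
  set P := Measure.pi fun _ : Fin n => μ
  have hsub : HasSubgaussianMGF (fun x => f x - ∫ y, f y ∂P) ⟨n * c ^ 2 / 4, by positivity⟩ P := by
    refine ⟨fun s => ?_, fun s => ?_⟩
    · simp only [mul_sub, Real.exp_sub]
      exact (integrable_exp_of_bdd hf hM s).div_const _
    · simp only [mgf, mul_sub, Real.exp_sub, integral_div]
      rw [div_le_iff₀ (Real.exp_pos _), ← Real.exp_add]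
      refine (mcdiarmid_mgf μ s n f hf hM hc).trans (le_of_eq ?_)
      congr 1
      change _ = (n * c ^ 2 / 4) * s ^ 2 / 2 + _
      simp only [P]
      ring
  refine le_trans (measureReal_mono fun x hx => ?_) (hsub.measure_ge_le ht)
  simp only [mem_ofPred_eq] at hx ⊢
  linarith

/-- Sign of a Boolean. -/
noncomputable def sg (b : Bool) : ℝ := if b then (1 : ℝ) else -1

lemma abs_sg (b : Bool) : |sg b| = 1 := by cases b <;> simp [sg]

lemma sg_not (b : Bool) : sg (!b) = - sg b := by cases b <;> simp [sg]

/-- Average over the sample. -/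
noncomputable def avg {n : ℕ} (u : Fin n → ℝ) : ℝ := (1 / (n : ℝ)) * ∑ i, u i

lemma avg_add {n : ℕ} (u v : Fin n → ℝ) : avg (fun i => u i + v i) = avg u + avg v := by
  simp [avg, Finset.sum_add_distrib, mul_add]

lemma avg_sub {n : ℕ} (u v : Fin n → ℝ) : avg (fun i => u i - v i) = avg u - avg v := by
  simp [avg, Finset.sum_sub_distrib, mul_sub]

lemma avg_neg {n : ℕ} (u : Fin n → ℝ) : avg (fun i => - u i) = - avg u := by
  simp [avg]

lemma avg_abs_le {n : ℕ} {u : Fin n → ℝ} {B : ℝ} (hB : 0 ≤ B) (hu : ∀ i, |u i| ≤ B) :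
    |avg u| ≤ B := by
  unfold avg
  rw [abs_mul]
  have h1 : |∑ i, u i| ≤ n * B := by
    refine (Finset.abs_sum_le_sum_abs _ _).trans ?_
    refine (Finset.sum_le_sum fun i _ => hu i).trans (by simp)
  rcases Nat.eq_zero_or_pos n with rfl | hn
  · simpa using hB
  · have : (0 : ℝ) < n := by exact_mod_cast hn
    rw [abs_of_nonneg (by positivity), one_div, inv_mul_le_iff₀ this]
    exact h1

lemma avg_osc {n : ℕ} {u v : Fin n → ℝ} (k : Fin n) (h : ∀ i, i ≠ k → u i = v i)
    (hk : u k - v k ≤ 1) : avg u ≤ avg v + 1 / n := by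
  have h1 : ∑ i, u i - ∑ i, v i = u k - v k := by
    rw [← Finset.sum_sub_distrib]
    exact Finset.sum_eq_single k (fun i _ hi => by rw [h i hi, sub_self]) (by simp)
  unfold avg
  have : (0 : ℝ) ≤ 1 / n := by positivity
  nlinarith

lemma ciSup_le_add {ι : Type*} [Nonempty ι] {a b : ι → ℝ} {d B : ℝ} (hb : ∀ j, |b j| ≤ B)
    (h : ∀ j, a j ≤ b j + d) : ⨆ j, a j ≤ (⨆ j, b j) + d :=
  ciSup_le fun j => (h j).trans (by
    gcongr
    exact le_ciSup (f := b) ⟨B, by rintro _ ⟨i, rfl⟩; exact (abs_le.mp (hb i)).2⟩ j)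

lemma le_ciSup_bdd {ι : Type*} {b : ι → ℝ} {B : ℝ} (hb : ∀ j, |b j| ≤ B) (j : ι) :
    b j ≤ ⨆ j, b j :=
  le_ciSup (f := b) ⟨B, by rintro _ ⟨i, rfl⟩; exact (abs_le.mp (hb i)).2⟩ j

lemma abs_ciSup_le {ι : Type*} [Nonempty ι] {b : ι → ℝ} {B : ℝ} (hb : ∀ j, |b j| ≤ B) :
    |⨆ j, b j| ≤ B := by
  rw [abs_le]
  refine ⟨?_, ciSup_le fun j => (abs_le.mp (hb j)).2⟩
  obtain ⟨j⟩ := ‹Nonempty ι›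
  exact (abs_le.mp (hb j)).1.trans (le_ciSup_bdd hb j)

section sym
variable {X ι : Type*}

/-- Signed supremum. -/
noncomputable def Wsup (F : ι → X → ℝ) {n : ℕ} (τ : Fin n → Bool) (x : Fin n → X) : ℝ :=
  ⨆ j, avg fun i => sg (τ i) * F j (x i)

/-- Rademacher complexity of an indexed family. -/
noncomputable def radF (F : ι → X → ℝ) {n : ℕ} (x : Fin n → X) : ℝ :=
  (∑ σ : Fin n → Bool, Wsup F σ x) / 2 ^ n

/-- One-sided deviation. -/
noncomputable def Phi [MeasurableSpace X] (D : Measure X) (F : ι → X → ℝ) {n : ℕ}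
    (x : Fin n → X) : ℝ :=
  ⨆ j, ((∫ a, F j a ∂D) - avg fun i => F j (x i))

/-- Ghost sample supremum. -/
noncomputable def Gsup (F : ι → X → ℝ) {n : ℕ} (τ : Fin n → Bool)
    (p : (Fin n → X) × (Fin n → X)) : ℝ :=
  ⨆ j, avg fun i => sg (τ i) * (F j (p.2 i) - F j (p.1 i))

/-- Flip all signs. -/
def flipE (n : ℕ) : (Fin n → Bool) ≃ (Fin n → Bool) where
  toFun σ := fun i => !σ i
  invFun σ := fun i => !σ i
  left_inv σ := by ext; simp
  right_inv σ := by ext; simp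

lemma Wsup_neg (F : ι → X → ℝ) {n : ℕ} (τ : Fin n → Bool) (x : Fin n → X) :
    Wsup (fun j a => - F j a) τ x = Wsup F (flipE n τ) x := by
  simp [Wsup, flipE, sg_not]

lemma radF_neg (F : ι → X → ℝ) {n : ℕ} (x : Fin n → X) :
    radF (fun j a => - F j a) x = radF F x := by
  unfold radF
  simp only [Wsup_neg]
  rw [(flipE n).sum_comp fun σ => Wsup F σ x]

variable {F : ι → X → ℝ} (hF1 : ∀ j a, |F j a| ≤ 1) (hF2 : ∀ j a b, F j a - F j b ≤ 1)

section
include hF1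

lemma Wterm_abs {n : ℕ} (τ : Fin n → Bool) (x : Fin n → X) (j : ι) :
    |avg fun i => sg (τ i) * F j (x i)| ≤ 1 :=
  avg_abs_le zero_le_one fun i => by rw [abs_mul, abs_sg, one_mul]; exact hF1 _ _

lemma Gterm_abs {n : ℕ} (τ : Fin n → Bool) (p : (Fin n → X) × (Fin n → X)) (j : ι) :
    |avg fun i => sg (τ i) * (F j (p.2 i) - F j (p.1 i))| ≤ 2 :=
  avg_abs_le zero_le_two fun i => by
    rw [abs_mul, abs_sg, one_mul]
    refine (abs_sub _ _).trans ?_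
    linarith [hF1 j (p.2 i), hF1 j (p.1 i)]

variable [Nonempty ι]

lemma Wsup_abs {n : ℕ} (τ : Fin n → Bool) (x : Fin n → X) : |Wsup F τ x| ≤ 1 :=
  abs_ciSup_le (Wterm_abs hF1 τ x)

lemma Gsup_abs {n : ℕ} (τ : Fin n → Bool) (p : (Fin n → X) × (Fin n → X)) : |Gsup F τ p| ≤ 2 :=
  abs_ciSup_le (Gterm_abs hF1 τ p)

lemma radF_abs {n : ℕ} (x : Fin n → X) : |radF F x| ≤ 1 := by
  unfold radF
  rw [abs_div, abs_of_pos (by positivity : (0 : ℝ) < 2 ^ n), div_le_one (by positivity)]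
  refine (Finset.abs_sum_le_sum_abs _ _).trans ?_
  refine (Finset.sum_le_sum fun σ _ => Wsup_abs hF1 σ x).trans (by simp)

lemma Gsup_le {n : ℕ} (τ : Fin n → Bool) (p : (Fin n → X) × (Fin n → X)) :
    Gsup F τ p ≤ Wsup F τ p.2 + Wsup F (flipE n τ) p.1 := by
  refine ciSup_le fun j => ?_
  have h1 := le_ciSup_bdd (Wterm_abs hF1 τ p.2) j
  have h2 := le_ciSup_bdd (Wterm_abs hF1 (flipE n τ) p.1) j
  refine le_trans (le_of_eq ?_) (add_le_add h1 h2)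
  rw [← avg_add]
  congr 1
  ext i
  simp only [flipE, Equiv.coe_fn_mk, sg_not]
  ring

include hF2 in
lemma Wsup_osc {n : ℕ} (τ : Fin n → Bool) (x y : Fin n → X) (k : Fin n)
    (h : ∀ i, i ≠ k → x i = y i) : Wsup F τ x ≤ Wsup F τ y + 1 / n := by
  refine ciSup_le_add (Wterm_abs hF1 τ y) fun j => avg_osc k (fun i hi => by rw [h i hi]) ?_
  have h1 := hF2 j (x k) (y k)
  have h2 := hF2 j (y k) (x k)
  cases τ k <;> simp [sg] <;> linarith

include hF2 in
lemma radF_osc {n : ℕ} (x y : Fin n → X) (k : Fin n)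
    (h : ∀ i, i ≠ k → x i = y i) : radF F x ≤ radF F y + 1 / n := by
  have h1 := Finset.sum_le_sum fun (σ : Fin n → Bool) (_ : σ ∈ Finset.univ) =>
    Wsup_osc hF1 hF2 σ x y k h
  rw [Finset.sum_add_distrib] at h1
  unfold radF
  rw [div_le_iff₀ (by positivity), add_mul, div_mul_cancel₀ _ (by positivity)]
  refine h1.trans (le_of_eq ?_)
  simp [mul_comm]

end

variable [MeasurableSpace X] (D : Measure X) [IsProbabilityMeasure D]
  (hFm : ∀ j, Measurable (F j))

section
include hF1

lemma int_abs (j : ι) : |∫ a, F j a ∂D| ≤ 1 := by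
  have := norm_integral_le_of_norm_le_const (μ := D) (f := F j) (C := 1)
    (Filter.Eventually.of_forall fun y => hF1 j y)
  simpa using this

lemma Phiterm_abs {n : ℕ} (x : Fin n → X) (j : ι) :
    |(∫ a, F j a ∂D) - avg fun i => F j (x i)| ≤ 2 := by
  refine (abs_sub _ _).trans ?_
  have := int_abs hF1 D j
  have h2 := avg_abs_le (u := fun i => F j (x i)) zero_le_one fun i => hF1 j (x i)
  linarith

include hF2 in
lemma Phi_osc [Nonempty ι] {n : ℕ} (x y : Fin n → X) (k : Fin n)
    (h : ∀ i, i ≠ k → x i = y i) : Phi D F x ≤ Phi D F y + 1 / n := by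
  refine ciSup_le_add (Phiterm_abs hF1 D y) fun j => ?_
  have := avg_osc (u := fun i => F j (y i)) (v := fun i => F j (x i)) k
    (fun i hi => by rw [h i hi]) (hF2 _ _ _)
  linarith

end

variable [Countable ι]

include hFm

lemma Wsup_meas {n : ℕ} (τ : Fin n → Bool) : Measurable (Wsup F τ) := by
  unfold Wsup avg
  refine Measurable.iSup fun j => ?_
  have := hFm j
  fun_prop

lemma radF_meas {n : ℕ} : Measurable (radF F (n := n)) := by
  have := fun τ => Wsup_meas hFm (n := n) τ
  unfold radF
  fun_prop

lemma Gsup_meas {n : ℕ} (τ : Fin n → Bool) : Measurable (Gsup F τ) := by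
  unfold Gsup avg
  refine Measurable.iSup fun j => ?_
  have := hFm j
  fun_prop

omit [IsProbabilityMeasure D] in
lemma Phi_meas {n : ℕ} : Measurable (Phi D F (n := n)) := by
  unfold Phi avg
  refine Measurable.iSup fun j => ?_
  have := hFm j
  fun_prop

omit hFm [Countable ι] in
lemma swap_mp {n : ℕ} (τ : Fin n → Bool) :
    MeasurePreserving (fun p : (Fin n → X) × (Fin n → X) =>
      ((fun i => if τ i then p.1 i else p.2 i, fun i => if τ i then p.2 i else p.1 i) :
        (Fin n → X) × (Fin n → X)))
      ((Measure.pi fun _ : Fin n => D).prod (Measure.pi fun _ : Fin n => D))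
      ((Measure.pi fun _ : Fin n => D).prod (Measure.pi fun _ : Fin n => D)) := by
  have he := measurePreserving_arrowProdEquivProdArrow X X (Fin n) (fun _ => D) (fun _ => D)
  have hs := he.symm
  have hm : MeasurePreserving (fun (q : Fin n → X × X) i =>
      (fun r : X × X => if τ i then r else r.swap) (q i))
      (Measure.pi fun _ : Fin n => D.prod D) (Measure.pi fun _ : Fin n => D.prod D) := by
    refine measurePreserving_pi (fun _ => D.prod D) (fun _ => D.prod D)
      (f := fun i r => if τ i then r else r.swap) fun i => ?_
    cases τ i
    · simpa using Measure.measurePreserving_swap (μ := D) (ν := D)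
    · simp only [if_true]
      exact MeasurePreserving.id (D.prod D)
  have := he.comp (hm.comp hs)
  convert this using 1
  ext p i
  · simp only [MeasurableEquiv.arrowProdEquivProdArrow, Function.comp]
    cases h : τ i <;> simp [Equiv.arrowProdEquivProdArrow, h]
  · simp only [MeasurableEquiv.arrowProdEquivProdArrow, Function.comp]
    cases h : τ i <;> simp [Equiv.arrowProdEquivProdArrow, h]

lemma Gsup_integral {n : ℕ} (τ : Fin n → Bool) :
    ∫ p, Gsup F τ p ∂((Measure.pi fun _ : Fin n => D).prod (Measure.pi fun _ : Fin n => D)) =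
    ∫ p, Gsup F (fun _ => true) p
      ∂((Measure.pi fun _ : Fin n => D).prod (Measure.pi fun _ : Fin n => D)) := by
  have h := swap_mp D τ
  conv_rhs => rw [← h.map_eq]
  rw [integral_map h.measurable.aemeasurable (Gsup_meas hFm _).aestronglyMeasurable]
  congr 1
  ext p
  unfold Gsup
  congr 1
  ext j
  congr 1
  ext i
  cases hi : τ i <;> simp [sg, hi]

variable [Nonempty ι]
include hF1

lemma symm_bound {n : ℕ} (hn : 1 ≤ n) :
    ∫ x, Phi D F x ∂(Measure.pi fun _ : Fin n => D) ≤
      2 * ∫ x, radF F x ∂(Measure.pi fun _ : Fin n => D) := by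
  set P := Measure.pi fun _ : Fin n => D with hP
  have hGi : ∀ τ : Fin n → Bool, Integrable (Gsup F τ) (P.prod P) := fun τ =>
    integrable_of_bdd (Gsup_meas hFm τ) (Gsup_abs hF1 τ)
  have hWi : ∀ τ : Fin n → Bool, Integrable (Wsup F τ) P := fun τ =>
    integrable_of_bdd (Wsup_meas hFm τ) (Wsup_abs hF1 τ)
  have hPi : Integrable (Phi D F (n := n)) P :=
    integrable_of_bdd (Phi_meas D hFm) fun x => abs_ciSup_le (Phiterm_abs hF1 D x)
  have hGs : ∀ (τ : Fin n → Bool) x, Integrable (fun y => Gsup F τ (x, y)) P := fun τ x =>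
    integrable_of_bdd ((Gsup_meas hFm τ).comp (by fun_prop)) fun y => Gsup_abs hF1 τ _
  -- step 1
  have h1 : ∫ x, Phi D F x ∂P ≤ ∫ p, Gsup F (fun _ : Fin n => true) p ∂(P.prod P) := by
    rw [integral_prod _ (hGi _)]
    refine integral_mono hPi (hGi _).integral_prod_left fun x => ?_
    refine ciSup_le fun j => ?_
    have hFi : ∀ i : Fin n, Integrable (fun y : Fin n → X => F j (y i)) P := fun i =>
      integrable_of_bdd ((hFm j).comp (by fun_prop)) fun y => hF1 j _
    have hev : ∀ i : Fin n, ∫ y, F j (y i) ∂P = ∫ a, F j a ∂D := fun i => by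
      have hmp := measurePreserving_eval (fun _ : Fin n => D) i
      rw [← hmp.map_eq, integral_map hmp.measurable.aemeasurable
        (hFm j).aestronglyMeasurable]
    have hai : Integrable (fun y : Fin n → X => avg fun i => F j (y i)) P := by
      unfold avg
      exact (integrable_finsetSum _ fun i _ => hFi i).const_mul _
    have hint : ∫ y, (avg fun i => F j (y i)) ∂P = ∫ a, F j a ∂D := by
      unfold avg
      rw [integral_const_mul, integral_finsetSum _ fun i _ => hFi i]
      simp only [hev]
      have : (n : ℝ) ≠ 0 := by positivity
      simp
      field_simp
    calc (∫ a, F j a ∂D) - (avg fun i => F j (x i))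
        = ∫ y, ((avg fun i => F j (y i)) - avg fun i => F j (x i)) ∂P := by
          rw [integral_sub hai (integrable_const _), hint]; simp
      _ ≤ ∫ y, Gsup F (fun _ => true) (x, y) ∂P := by
          refine integral_mono (hai.sub (integrable_const _)) (hGs _ x) fun y => ?_
          refine le_trans (le_of_eq ?_) (le_ciSup_bdd (Gterm_abs hF1 (fun _ => true) (x, y)) j)
          simp [sg, avg_sub]
  -- step 2
  have h2 : ∀ τ : Fin n → Bool, ∫ p, Gsup F (fun _ : Fin n => true) p ∂(P.prod P) ≤
      ∫ x, Wsup F τ x ∂P + ∫ x, Wsup F (flipE n τ) x ∂P := fun τ => by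
    rw [← Gsup_integral D hFm τ]
    have ha : Integrable (fun p : (Fin n → X) × (Fin n → X) => Wsup F τ p.2) (P.prod P) :=
      (hWi τ).comp_snd P
    have hb : Integrable (fun p : (Fin n → X) × (Fin n → X) => Wsup F (flipE n τ) p.1)
        (P.prod P) := (hWi _).comp_fst P
    calc _ ≤ ∫ p, (Wsup F τ p.2 + Wsup F (flipE n τ) p.1) ∂(P.prod P) :=
          integral_mono (hGi τ) (ha.add hb) (Gsup_le hF1 τ)
      _ = _ := by
          rw [integral_add ha hb, integral_fun_snd, integral_fun_fst]
          simp
  have h3 := Finset.sum_le_sum fun (τ : Fin n → Bool) (_ : τ ∈ Finset.univ) => h2 τ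
  rw [Finset.sum_add_distrib, (flipE n).sum_comp fun τ => ∫ x, Wsup F τ x ∂P] at h3
  have h4 : ∫ x, radF F x ∂P = (∑ τ : Fin n → Bool, ∫ x, Wsup F τ x ∂P) / 2 ^ n := by
    unfold radF
    rw [integral_div, integral_finsetSum _ fun τ _ => hWi τ]
  rw [h4]
  refine h1.trans ?_
  simp only [Finset.sum_const, Finset.card_univ, Fintype.card_pi, Fintype.card_bool,
    Finset.prod_const, Fintype.card_fin, nsmul_eq_mul, Nat.cast_pow, Nat.cast_ofNat] at h3
  rw [← mul_div_assoc, le_div_iff₀ (by positivity)]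
  linarith

include hF2

lemma tail_bound {n : ℕ} (hn : 1 ≤ n) {δ : ℝ} (hδ : δ ∈ Ioo (0 : ℝ) 1) :
    (Measure.pi fun _ : Fin n => D) {x | 3 * Real.sqrt (Real.log (4 / δ) / (2 * n)) ≤
      Phi D F x - 2 * radF F x} ≤ ENNReal.ofReal (δ / 4) := by
  have hn0 : (0 : ℝ) < n := by positivity
  have hδ0 := hδ.1
  have hL : 0 ≤ Real.log (4 / δ) := Real.log_nonneg (by
    rw [le_div_iff₀ hδ0]; linarith [hδ.2])
  have hPa : ∀ x : Fin n → X, |Phi D F x| ≤ 2 := fun x => abs_ciSup_le (Phiterm_abs hF1 D x)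
  have hm : Measurable fun x : Fin n → X => Phi D F x - 2 * radF F x :=
    (Phi_meas D hFm).sub ((radF_meas hFm).const_mul _)
  have key := mcdiarmid D (c := 3 / n) (M := 4) n (fun x => Phi D F x - 2 * radF F x) hm
    (fun x => by
      have h1 := abs_le.mp (hPa x)
      have h2 := abs_le.mp (radF_abs hF1 x)
      rw [abs_le]; constructor <;> linarith [h1.1, h1.2, h2.1, h2.2])
    (fun x y i h => by
      have h1 := Phi_osc hF1 hF2 D x y i h
      have h2 := radF_osc hF1 hF2 y x i (fun j hj => (h j hj).symm)
      have : (3 : ℝ) / n = 3 * (1 / n) := by ring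
      rw [this]
      linarith)
    (by
      rw [integral_sub (integrable_of_bdd (Phi_meas D hFm) hPa)
        ((integrable_of_bdd (radF_meas hFm) (radF_abs hF1)).const_mul _), integral_const_mul]
      linarith [symm_bound hF1 D hFm hn])
    (t := 3 * Real.sqrt (Real.log (4 / δ) / (2 * n))) (by positivity)
  rw [ENNReal.le_ofReal_iff_toReal_le (measure_ne_top _ _) (by positivity)]
  refine key.trans (le_of_eq ?_)
  have : -(3 * Real.sqrt (Real.log (4 / δ) / (2 * n))) ^ 2 / (2 * (n * (3 / n) ^ 2 / 4)) =
      - Real.log (4 / δ) := by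
    rw [mul_pow, Real.sq_sqrt (by positivity)]
    field_simp
    ring
  rw [this, Real.exp_neg, Real.exp_log (by positivity), inv_div]

end sym

theorem stmt_5 {X : Type*} [MeasurableSpace X]
    (D D' : Measure X) [IsProbabilityMeasure D] [IsProbabilityMeasure D']
    (Ht : Set (X → ℝ)) (hHcount : Ht.Countable) (hHne : Ht.Nonempty)
    (hmeas : ∀ h ∈ Ht, Measurable h)
    (hrange : ∀ h ∈ Ht, ∀ x, h x = 0 ∨ h x = 1)
    (n : ℕ) (hn : 1 ≤ n) (δ : ℝ) (hδ : δ ∈ Ioo (0 : ℝ) 1) :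
    ENNReal.ofReal (1 - δ) ≤
      ((Measure.pi fun _ : Fin n => D).prod (Measure.pi fun _ : Fin n => D'))
        {p | dH Ht D D' ≤
          dH Ht (empD p.1) (empD p.2) + 2 * radS p.1 Ht + 2 * radS p.2 Ht +
            6 * Real.sqrt (Real.log (4 / δ) / (2 * n))} := by
  
  have : Nonempty Ht := hHne.to_subtype
  have : Countable Ht := hHcount.to_subtype
  set T := Real.sqrt (Real.log (4 / δ) / (2 * n)) with hT
  set F : Ht → X → ℝ := fun h a => h.1 a with hF
  set N : Ht → X → ℝ := fun h a => - F h a with hN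
  have hFm : ∀ j, Measurable (F j) := fun j => hmeas j.1 j.2
  have hNm : ∀ j, Measurable (N j) := fun j => (hFm j).neg
  have hF1 : ∀ j a, |F j a| ≤ 1 := fun j a => by
    rcases hrange j.1 j.2 a with h | h <;> simp [F, h]
  have hN1 : ∀ j a, |N j a| ≤ 1 := fun j a => by simpa [N] using hF1 j a
  have hF2 : ∀ j a b, F j a - F j b ≤ 1 := fun j a b => by
    rcases hrange j.1 j.2 a with h | h <;> rcases hrange j.1 j.2 b with h' | h' <;>
      simp [F, h, h']
  have hN2 : ∀ j a b, N j a - N j b ≤ 1 := fun j a b => by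
    have := hF2 j b a
    simp only [N]; linarith
  have hrad : ∀ x : Fin n → X, radS x Ht = radF F x := fun x => by
    simp only [radS, radF, sSup_image', Wsup, avg, sg, F]
  have hradN : ∀ x : Fin n → X, radF N x = radF F x := fun x => radF_neg F x
  have hone : ∀ (j : Ht) (a : X), ({x | j.1 x = 1} : Set X).indicator (1 : X → ℝ) a = F j a :=
    fun j a => by
      rcases hrange j.1 j.2 a with h | h <;> simp [F, h, indicator]
  have hms : ∀ j : Ht, MeasurableSet {x | j.1 x = 1} := fun j =>
    hmeas j.1 j.2 (measurableSet_singleton 1)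
  have hint : ∀ (Q : Measure X) (j : Ht), (Q {x | j.1 x = 1}).toReal = ∫ a, F j a ∂Q :=
    fun Q j => by
      simp only [← hone]
      rw [integral_indicator_one (hms j)]; rfl
  have hemp : ∀ (x : Fin n → X) (j : Ht),
      (empD x {x | j.1 x = 1}).toReal = avg fun i => F j (x i) := fun x j => by
    simp only [empD, Measure.smul_apply, Measure.finsetSum_apply, smul_eq_mul, avg,
      ENNReal.toReal_mul, ENNReal.toReal_inv, ENNReal.toReal_natCast, one_div]
    rw [ENNReal.toReal_sum fun i _ => measure_ne_top _ _]
    congr 1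
    refine Finset.sum_congr rfl fun i _ => ?_
    rw [Measure.dirac_apply' _ (hms j)]
    rcases hrange j.1 j.2 (x i) with h | h <;> simp [F, h, indicator]
  set P := Measure.pi fun _ : Fin n => D with hP
  set P' := Measure.pi fun _ : Fin n => D' with hP'
  set B1 := {x : Fin n → X | 3 * T ≤ Phi D F x - 2 * radF F x} with hB1
  set B2 := {x : Fin n → X | 3 * T ≤ Phi D N x - 2 * radF N x} with hB2
  set C1 := {x : Fin n → X | 3 * T ≤ Phi D' F x - 2 * radF F x} with hC1
  set C2 := {x : Fin n → X | 3 * T ≤ Phi D' N x - 2 * radF N x} with hC2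
  have b1 : P B1 ≤ ENNReal.ofReal (δ / 4) := tail_bound hF1 hF2 D hFm hn hδ
  have b2 : P B2 ≤ ENNReal.ofReal (δ / 4) := tail_bound hN1 hN2 D hNm hn hδ
  have c1 : P' C1 ≤ ENNReal.ofReal (δ / 4) := tail_bound hF1 hF2 D' hFm hn hδ
  have c2 : P' C2 ≤ ENNReal.ofReal (δ / 4) := tail_bound hN1 hN2 D' hNm hn hδ
  have e1 : ∀ B : Set (Fin n → X), (P.prod P') (B ×ˢ univ) = P B := fun B => by
    rw [Measure.prod_prod]; simp
  have e2 : ∀ C : Set (Fin n → X), (P.prod P') (univ ×ˢ C) = P' C := fun C => by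
    rw [Measure.prod_prod]; simp
  set A := {p : (Fin n → X) × (Fin n → X) | dH Ht D D' ≤
          dH Ht (empD p.1) (empD p.2) + 2 * radS p.1 Ht + 2 * radS p.2 Ht + 6 * T} with hA
  have hcover : (univ : Set ((Fin n → X) × (Fin n → X))) ⊆
      A ∪ (((B1 ×ˢ univ) ∪ (B2 ×ˢ univ)) ∪ ((univ ×ˢ C1) ∪ (univ ×ˢ C2))) := by
    rintro ⟨x, y⟩ -
    by_contra hcon
    simp only [mem_union, mem_prod, mem_univ, and_true, true_and, not_or] at hcon
    obtain ⟨hnA, ⟨n1, n2⟩, n3, n4⟩ := hcon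
    apply hnA
    simp only [hB1, hB2, hC1, hC2, mem_ofPred_eq, not_le, hradN] at n1 n2 n3 n4
    simp only [hA, mem_ofPred_eq, hrad]
    have hav : ∀ (z : Fin n → X) j, |avg fun i => F j (z i)| ≤ 1 := fun z j =>
      avg_abs_le zero_le_one fun i => hF1 j _
    unfold dH
    rw [sSup_image', sSup_image']
    simp only [hint D, hint D', hemp]
    have hbd : ∀ j : Ht, |(|(avg fun i => F j (x i)) - avg fun i => F j (y i)|)| ≤ 2 :=
      fun j => by
        rw [abs_abs]
        refine (abs_sub _ _).trans ?_
        linarith [hav x j, hav y j]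
    refine ciSup_le fun j => ?_
    have m := le_ciSup_bdd hbd j
    have m1 : _ ≤ Phi D F x := le_ciSup_bdd (Phiterm_abs hF1 D x) j
    have m2 : _ ≤ Phi D N x := le_ciSup_bdd (Phiterm_abs hN1 D x) j
    have m3 : _ ≤ Phi D' F y := le_ciSup_bdd (Phiterm_abs hF1 D' y) j
    have m4 : _ ≤ Phi D' N y := le_ciSup_bdd (Phiterm_abs hN1 D' y) j
    simp only [N, integral_neg, avg_neg] at m2 m4
    have q1 := le_abs_self ((avg fun i => F j (x i)) - avg fun i => F j (y i))
    have q2 := neg_abs_le ((avg fun i => F j (x i)) - avg fun i => F j (y i))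
    rw [abs_le]
    constructor <;> linarith
  have hδ0 := hδ.1
  have htot : (1 : ℝ≥0∞) ≤ (P.prod P') A + ENNReal.ofReal δ := by
    calc (1 : ℝ≥0∞) = (P.prod P') univ := measure_univ.symm
      _ ≤ _ := measure_mono hcover
      _ ≤ (P.prod P') A + ((P.prod P') (B1 ×ˢ univ) + (P.prod P') (B2 ×ˢ univ) +
            ((P.prod P') (univ ×ˢ C1) + (P.prod P') (univ ×ˢ C2))) := by
          refine (measure_union_le _ _).trans (add_le_add le_rfl ?_)
          refine (measure_union_le _ _).trans (add_le_add ?_ ?_) <;> exact measure_union_le _ _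
      _ ≤ (P.prod P') A + ((ENNReal.ofReal (δ / 4) + ENNReal.ofReal (δ / 4)) +
            (ENNReal.ofReal (δ / 4) + ENNReal.ofReal (δ / 4))) := by
          rw [e1, e1, e2, e2]
          gcongr
      _ = _ := by
          rw [← ENNReal.ofReal_add (by positivity) (by positivity),
            ← ENNReal.ofReal_add (by positivity) (by positivity)]
          congr 2
          ring
  rw [ENNReal.ofReal_sub _ hδ0.le, ENNReal.ofReal_one]
  exact tsub_le_iff_right.mpr htot
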